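/- Let ℍ be the real quaternion algebra, with all tensor products taken over ℚ. The first Hochschild homology I₁(ℍ)/B₁(ℍ) is isomorphic, as an abelian group, to the module Ω¹_ℝ of Kähler differentials of ℝ over ℤ; here I₁(ℍ) = {x ∈ ℍ ⊗_ℚ ℍ : μ(x) = 0 and μ(σ(x)) = 0} and B₁(ℍ) is the image under b₂(a⊗b⊗c) = ab⊗c − a⊗bc + ca⊗b of Ω₂(ℍ) = ker(μ⊗id) ∩ ker(id⊗μ) ⊂ ℍ^{⊗3}. -/

import Mathlib

open scoped TensorProduct DirectSum

noncomputable section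

variable (A : Type) [Ring A] [Algebra ℚ A]

/-- Multiplication `A ⊗ A → A`. -/
def mu2 : (A ⊗[ℚ] A) →ₗ[ℚ] A := LinearMap.mul' ℚ A

/-- `a ⊗ b ⊗ c ↦ ab ⊗ c`. -/
def m12 : (A ⊗[ℚ] (A ⊗[ℚ] A)) →ₗ[ℚ] (A ⊗[ℚ] A) :=
  (TensorProduct.map (LinearMap.mul' ℚ A) LinearMap.id) ∘ₗ
    (TensorProduct.assoc ℚ A A A).symm.toLinearMap

/-- `a ⊗ b ⊗ c ↦ a ⊗ bc`. -/
def m23 : (A ⊗[ℚ] (A ⊗[ℚ] A)) →ₗ[ℚ] (A ⊗[ℚ] A) :=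
  TensorProduct.map LinearMap.id (LinearMap.mul' ℚ A)

/-- `a ⊗ b ⊗ c ↦ ca ⊗ b`. -/
def m31 : (A ⊗[ℚ] (A ⊗[ℚ] A)) →ₗ[ℚ] (A ⊗[ℚ] A) :=
  (TensorProduct.comm ℚ A A).toLinearMap ∘ₗ
    (TensorProduct.map LinearMap.id (LinearMap.mul' ℚ A)) ∘ₗ
    (TensorProduct.assoc ℚ A A A).toLinearMap ∘ₗ
    (TensorProduct.comm ℚ A (A ⊗[ℚ] A)).toLinearMap

/-- The Hochschild boundary `b₂(a ⊗ b ⊗ c) = ab ⊗ c − a ⊗ bc + ca ⊗ b`. -/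
def hochB2 : (A ⊗[ℚ] (A ⊗[ℚ] A)) →ₗ[ℚ] (A ⊗[ℚ] A) := m12 A - m23 A + m31 A

/-- `Ω₂(A) = ker(μ ⊗ id) ∩ ker(id ⊗ μ)`. -/
def Omega2 : Submodule ℚ (A ⊗[ℚ] (A ⊗[ℚ] A)) := LinearMap.ker (m12 A) ⊓ LinearMap.ker (m23 A)

/-- `I₁(A) = {x : μ(x) = 0, μ(σ(x)) = 0}`. -/
def I1 : Submodule ℚ (A ⊗[ℚ] A) :=
  LinearMap.ker (mu2 A) ⊓
    LinearMap.ker ((mu2 A) ∘ₗ (TensorProduct.comm ℚ A A).toLinearMap)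

/-- `B₁(A) = b₂(Ω₂(A))`. -/
def B1 : Submodule ℚ (A ⊗[ℚ] A) := (Omega2 A).map (hochB2 A)

set_option linter.unusedSimpArgs false
set_option linter.unusedSectionVars false

namespace HQ

abbrev H := Quaternion ℝ
abbrev Om := KaehlerDifferential ℤ ℝ

/-- The quaternion units. -/
def qi : H := ⟨0, 1, 0, 0⟩
def qj : H := ⟨0, 0, 1, 0⟩
def qk : H := ⟨0, 0, 0, 1⟩

@[simp] lemma qi_re : qi.re = 0 := rfl
@[simp] lemma qi_imI : qi.imI = 1 := rfl
@[simp] lemma qi_imJ : qi.imJ = 0 := rfl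
@[simp] lemma qi_imK : qi.imK = 0 := rfl
@[simp] lemma qj_re : qj.re = 0 := rfl
@[simp] lemma qj_imI : qj.imI = 0 := rfl
@[simp] lemma qj_imJ : qj.imJ = 1 := rfl
@[simp] lemma qj_imK : qj.imK = 0 := rfl
@[simp] lemma qk_re : qk.re = 0 := rfl
@[simp] lemma qk_imI : qk.imI = 0 := rfl
@[simp] lemma qk_imJ : qk.imJ = 0 := rfl
@[simp] lemma qk_imK : qk.imK = 1 := rfl
@[simp] lemma one_re : (1 : H).re = 1 := rfl
@[simp] lemma one_imI : (1 : H).imI = 0 := rfl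
@[simp] lemma one_imJ : (1 : H).imJ = 0 := rfl
@[simp] lemma one_imK : (1 : H).imK = 0 := rfl

lemma ii : qi * qi = -1 := by ext <;> simp
lemma jj : qj * qj = -1 := by ext <;> simp
lemma kk : qk * qk = -1 := by ext <;> simp
lemma ij : qi * qj = qk := by ext <;> simp
lemma ji : qj * qi = -qk := by ext <;> simp
lemma jk : qj * qk = qi := by ext <;> simp
lemma kj : qk * qj = -qi := by ext <;> simp
lemma ki : qk * qi = qj := by ext <;> simp
lemma ik : qi * qk = -qj := by ext <;> simp

lemma decomp (b : H) : b = (b.re : H) + (b.imI : H) * qi + (b.imJ : H) * qj + (b.imK : H) * qk := by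
  ext <;> simp

lemma decomp' (b : H) : b = b.re • (1 : H) + b.imI • qi + b.imJ • qj + b.imK • qk := by
  ext <;> simp

section abs
variable {M : Type} [AddCommGroup M] [Module ℝ M] (q : H →+ H →+ M)
  (hs : ∀ (r : ℝ) a b, q (r • a) b = r • q a b)
  (hq : ∀ a b c, q (a * b) c - q a (b * c) + q (c * a) b = 0)

def G (z : H) : M :=
  (1/4 : ℝ) • (q z 1 - q (z * qi) qi - q (z * qj) qj - q (z * qk) qk)

lemma G_add (z w : H) : G q (z + w) = G q z + G q w := by
  simp only [G, add_mul, map_add, AddMonoidHom.add_apply]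
  module

include hq in
lemma q_one (a : H) : q a 1 = 0 := by
  simpa using hq a 1 1

include hq in
lemma q_unit_i (c : H) : q c qi = G q (c * qi - qi * c) := by
  have h0 := q_one q hq
  have h1 := hq (c * qi) qi qi
  have h2 := hq (c * qj) qj qi
  have h3 := hq (c * qk) qk qi
  simp only [G, sub_mul, mul_assoc, ii, jj, kk, ij, ji, jk, kj, ki, ik, mul_neg, mul_one, neg_mul,
    map_neg, map_sub, AddMonoidHom.neg_apply, AddMonoidHom.sub_apply, h0] at *
  linear_combination (norm := module) (-1/4 : ℝ) • h1 + (-1/4 : ℝ) • h2 + (-1/4 : ℝ) • h3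

include hq in
lemma q_unit_j (c : H) : q c qj = G q (c * qj - qj * c) := by
  have h0 := q_one q hq
  have h1 := hq (c * qi) qi qj
  have h2 := hq (c * qj) qj qj
  have h3 := hq (c * qk) qk qj
  simp only [G, sub_mul, mul_assoc, ii, jj, kk, ij, ji, jk, kj, ki, ik, mul_neg, mul_one, neg_mul,
    map_neg, map_sub, AddMonoidHom.neg_apply, AddMonoidHom.sub_apply, h0] at *
  linear_combination (norm := module) (-1/4 : ℝ) • h1 + (-1/4 : ℝ) • h2 + (-1/4 : ℝ) • h3

include hq in
lemma q_unit_k (c : H) : q c qk = G q (c * qk - qk * c) := by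
  have h0 := q_one q hq
  have h1 := hq (c * qi) qi qk
  have h2 := hq (c * qj) qj qk
  have h3 := hq (c * qk) qk qk
  simp only [G, sub_mul, mul_assoc, ii, jj, kk, ij, ji, jk, kj, ki, ik, mul_neg, mul_one, neg_mul,
    map_neg, map_sub, AddMonoidHom.neg_apply, AddMonoidHom.sub_apply, h0] at *
  linear_combination (norm := module) (-1/4 : ℝ) • h1 + (-1/4 : ℝ) • h2 + (-1/4 : ℝ) • h3

include hq in
lemma q_comm (p p' : H) (s : ℝ) : q (p * p') s = q (p' * p) s := by
  have h1 := hq p' s p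
  have h2 := hq p' p s
  have e1 : (s : H) * p = p * s := Quaternion.coe_commutes s p
  have e2 : (s : H) * p' = p' * s := Quaternion.coe_commutes s p'
  rw [e1] at h1
  rw [e2] at h2
  linear_combination (norm := module) h1 - h2

include hs hq in
lemma q_real (z : H) (s : ℝ) : q z s = z.re • q 1 s := by
  have two : ∀ x : M, x = -x → x = 0 := fun x hx => by
    linear_combination (norm := module) (1/2 : ℝ) • hx
  have h1 : q qi s = 0 := two _ (by
    have := q_comm q hq qj qk s
    rwa [jk, kj, map_neg] at this)
  have h2 : q qj s = 0 := two _ (by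
    have := q_comm q hq qk qi s
    rwa [ki, ik, map_neg] at this)
  have h3 : q qk s = 0 := two _ (by
    have := q_comm q hq qi qj s
    rwa [ij, ji, map_neg] at this)
  conv_lhs => rw [decomp' z]
  simp only [map_add, AddMonoidHom.add_apply, hs, h1, h2, h3]
  simp

include hs hq in
lemma main_formula (a b : H) : q a b =
    (a.re • q 1 (b.re : H) - a.imI • q 1 (b.imI : H) - a.imJ • q 1 (b.imJ : H)
      - a.imK • q 1 (b.imK : H)) + G q (a * b - b * a) := by
  have e : a * b - b * a = (a * b.imI * qi - qi * (a * b.imI)) + (a * b.imJ * qj - qj * (a * b.imJ))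
      + (a * b.imK * qk - qk * (a * b.imK)) := by
    ext <;> simp <;> ring
  rw [e, G_add, G_add, ← q_unit_i q hq, ← q_unit_j q hq, ← q_unit_k q hq]
  have h1 := hq a b.imI qi
  have h2 := hq a b.imJ qj
  have h3 := hq a b.imK qk
  rw [q_real q hs hq (qi * a)] at h1
  rw [q_real q hs hq (qj * a)] at h2
  rw [q_real q hs hq (qk * a)] at h3
  have r1 : (qi * a).re = - a.imI := by simp
  have r2 : (qj * a).re = - a.imJ := by simp
  have r3 : (qk * a).re = - a.imK := by simp
  rw [r1] at h1
  rw [r2] at h2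
  rw [r3] at h3
  have h0 := q_real q hs hq a b.re
  conv_lhs => rw [decomp b]
  simp only [map_add]
  linear_combination (norm := module) h0 - h1 - h2 - h3
end abs

section gen
variable (A : Type) [Ring A] [Algebra ℚ A]

@[simp] lemma m12_t (a b c : A) : m12 A (a ⊗ₜ (b ⊗ₜ c)) = (a * b) ⊗ₜ c := by simp [m12]
@[simp] lemma m23_t (a b c : A) : m23 A (a ⊗ₜ (b ⊗ₜ c)) = a ⊗ₜ (b * c) := by simp [m23]
@[simp] lemma m31_t (a b c : A) : m31 A (a ⊗ₜ (b ⊗ₜ c)) = (c * a) ⊗ₜ b := by simp [m31]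
lemma b2_t (a b c : A) : hochB2 A (a ⊗ₜ (b ⊗ₜ c)) =
    (a * b) ⊗ₜ c - a ⊗ₜ (b * c) + (c * a) ⊗ₜ b := by simp [hochB2]

lemma tind {p : A ⊗[ℚ] (A ⊗[ℚ] A) → Prop} (h0 : p 0) (ht : ∀ a b c, p (a ⊗ₜ (b ⊗ₜ c)))
    (ha : ∀ x y, p x → p y → p (x + y)) (x) : p x := by
  induction x with
  | zero => exact h0
  | add x y hx hy => exact ha x y hx hy
  | tmul a y =>
    induction y with
    | zero => simpa using h0
    | add x y hx hy => rw [TensorProduct.tmul_add]; exact ha _ _ hx hy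
    | tmul b c => exact ht a b c

/-- `a ⊗ b ↦ a ⊗ b - ab ⊗ 1`. -/
def P (x : A ⊗[ℚ] A) : A ⊗[ℚ] A := x - (mu2 A x) ⊗ₜ 1

lemma P_b2 (y) : P A (hochB2 A y) ∈ B1 A := by
  induction y using tind with
  | h0 => simp [P]
  | ha x y hx hy =>
    have : P A (hochB2 A (x + y)) = P A (hochB2 A x) + P A (hochB2 A y) := by
      simp only [P, map_add, TensorProduct.add_tmul]; abel
    rw [this]; exact add_mem hx hy
  | ht a b c =>
    refine ⟨a ⊗ₜ (b ⊗ₜ c) - a ⊗ₜ ((b * c) ⊗ₜ 1) - (a * b) ⊗ₜ (1 ⊗ₜ c) + (a * b) ⊗ₜ (c ⊗ₜ 1),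
      ⟨?_, ?_⟩, ?_⟩
    · simp [mul_assoc]
    · simp
    · simp only [P, map_add, map_sub, b2_t, mu2, LinearMap.mul'_apply, mul_one, one_mul, mul_assoc,
        TensorProduct.add_tmul, TensorProduct.sub_tmul]
      abel

lemma I1_b2 (y) (h : hochB2 A y ∈ I1 A) : hochB2 A y ∈ B1 A := by
  have := P_b2 A y
  have h1 : mu2 A (hochB2 A y) = 0 := h.1
  simpa [P, h1] using this
end gen

def N : Submodule ℝ (H ⊗[ℚ] H) where
  carrier := Set.range (hochB2 H)
  zero_mem' := ⟨0, map_zero _⟩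
  add_mem' := by
    rintro _ _ ⟨x, rfl⟩ ⟨y, rfl⟩
    exact ⟨x + y, map_add _ _ _⟩
  smul_mem' := by
    rintro r _ ⟨x, rfl⟩
    refine ⟨r • x, ?_⟩
    induction x using tind with
    | h0 => simp
    | ha x y hx hy => rw [smul_add, map_add, map_add, hx, hy, smul_add]
    | ht a b c =>
      rw [TensorProduct.smul_tmul', b2_t, b2_t]
      simp [smul_add, smul_sub, TensorProduct.smul_tmul']

abbrev M := (H ⊗[ℚ] H) ⧸ N

def q : H →+ H →+ M :=
  AddMonoidHom.mk' (fun a => AddMonoidHom.mk' (fun b => N.mkQ (a ⊗ₜ b))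
    (fun x y => by rw [TensorProduct.tmul_add, map_add]))
    (fun x y => by ext b; simp [TensorProduct.add_tmul])

lemma q_apply (a b : H) : q a b = N.mkQ (a ⊗ₜ b) := rfl

lemma q_smul (r : ℝ) (a b : H) : q (r • a) b = r • q a b := by
  rw [q_apply, q_apply, ← map_smul, TensorProduct.smul_tmul']

lemma q_rel (a b c : H) : q (a * b) c - q a (b * c) + q (c * a) b = 0 := by
  simp only [q_apply, ← map_sub, ← map_add]
  rw [Submodule.mkQ_apply, Submodule.Quotient.mk_eq_zero]
  exact ⟨_, b2_t H a b c⟩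

abbrev D := KaehlerDifferential.D ℤ ℝ

def der : Derivation ℤ ℝ M := Derivation.mk'
  (((q 1).comp (algebraMap ℝ H).toAddMonoidHom).toIntLinearMap) (by
    intro s t
    have h := q_rel 1 s t
    have e : ∀ r : ℝ, algebraMap ℝ H r = (r : H) := fun r => rfl
    have e' : ∀ r : ℝ, (r : H) = r • 1 := fun r => by ext <;> simp
    have e2 : q (s : H) t = s • q 1 t := by rw [e' s, q_smul]
    have e3 : q (t : H) s = t • q 1 s := by rw [e' t, q_smul]
    simp only [one_mul, mul_one, e2, e3] at h
    simp only [AddMonoidHom.coe_toIntLinearMap, AddMonoidHom.comp_apply, RingHom.toAddMonoidHom_eq_coe,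
      AddMonoidHom.coe_coe, e, Quaternion.coe_mul]
    linear_combination (norm := module) -h)

def Psi : Om →ₗ[ℝ] M := der.liftKaehlerDifferential

lemma Psi_D (s : ℝ) : Psi (D s) = q 1 s := by
  simp only [Psi, Derivation.liftKaehlerDifferential_comp_D]; rfl

def phi (a b : H) : Om := a.re • D b.re - a.imI • D b.imI - a.imJ • D b.imJ - a.imK • D b.imK

def Phi : (H ⊗[ℚ] H) →+ Om :=
  TensorProduct.liftAddHom
    (AddMonoidHom.mk' (fun a => AddMonoidHom.mk' (phi a)
      (fun x y => by simp only [phi, Quaternion.re_add, Quaternion.imI_add, Quaternion.imJ_add,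
                      Quaternion.imK_add, map_add]; module))
      (fun x y => by
        ext b
        simp only [phi, Quaternion.re_add, Quaternion.imI_add, Quaternion.imJ_add,
                      Quaternion.imK_add, AddMonoidHom.mk'_apply, AddMonoidHom.add_apply]
        module))
    (fun r a b => by
      have e : ∀ x : ℝ, D (r • x) = r • D x := fun x => map_rat_smul D r x
      simp only [AddMonoidHom.mk'_apply, phi, Quaternion.re_smul, Quaternion.imI_smul,
        Quaternion.imJ_smul, Quaternion.imK_smul, e]
      simp only [Rat.smul_def]
      have e2 : ∀ y : Om, r • y = (r : ℝ) • y := fun y => (Rat.cast_smul_eq_qsmul ℝ r y).symm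
      simp only [e2]
      module)

lemma Phi_t (a b : H) : Phi (a ⊗ₜ b) = phi a b := by simp [Phi]

lemma Phi_b2 (y) : Phi (hochB2 H y) = 0 := by
  induction y using tind with
  | h0 => simp
  | ha x y hx hy => rw [map_add, map_add, hx, hy, add_zero]
  | ht a b c =>
    rw [b2_t, map_add, map_sub, Phi_t, Phi_t, Phi_t]
    simp only [phi, Quaternion.re_mul, Quaternion.imI_mul, Quaternion.imJ_mul, Quaternion.imK_mul,
      map_add, map_sub, Derivation.leibniz]
    module

lemma Psi_Phi (x : H ⊗[ℚ] H) : N.mkQ x = Psi (Phi x) +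
    G q (mu2 H x - mu2 H (TensorProduct.comm ℚ H H x)) := by
  induction x with
  | zero => simp [G]
  | add x y hx hy =>
    have : mu2 H (x + y) - mu2 H (TensorProduct.comm ℚ H H (x + y)) =
      (mu2 H x - mu2 H (TensorProduct.comm ℚ H H x)) +
      (mu2 H y - mu2 H (TensorProduct.comm ℚ H H y)) := by simp only [map_add]; abel
    rw [this, G_add, map_add, map_add, map_add, hx, hy]; abel
  | tmul a b =>
    rw [← q_apply, Phi_t, main_formula q q_smul q_rel a b]
    simp only [phi, map_sub, map_smul, Psi_D, mu2, TensorProduct.comm_tmul, LinearMap.mul'_apply]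

lemma ker_Phi (x) (hx : x ∈ I1 H) (h : Phi x = 0) : x ∈ B1 H := by
  have h1 : mu2 H x = 0 := hx.1
  have h2 : mu2 H (TensorProduct.comm ℚ H H x) = 0 := hx.2
  have := Psi_Phi x
  rw [h, h1, h2] at this
  simp only [G, map_zero, zero_mul, sub_zero, AddMonoidHom.zero_apply, smul_zero, add_zero] at this
  rw [Submodule.mkQ_apply, Submodule.Quotient.mk_eq_zero] at this
  obtain ⟨y, rfl⟩ := this
  exact I1_b2 H y hx

lemma surj (w : Om) : ∃ x ∈ I1 H, Phi x = w := by
  have hw : w ∈ Submodule.span ℝ (Set.range D) := by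
    rw [KaehlerDifferential.span_range_derivation]; trivial
  induction hw using Submodule.closure_induction with
  | zero => exact ⟨0, zero_mem _, map_zero _⟩
  | add x y _ _ hx hy =>
    obtain ⟨a, ha, rfl⟩ := hx
    obtain ⟨b, hb, rfl⟩ := hy
    exact ⟨a + b, add_mem ha hb, map_add _ _ _⟩
  | smul_mem r x hx =>
    obtain ⟨s, rfl⟩ := hx
    refine ⟨(r : H) ⊗ₜ (s : H) - ((r : H) * s) ⊗ₜ 1, ⟨?_, ?_⟩, ?_⟩
    · simp [mu2]
    · simp [mu2, ← Quaternion.coe_mul, mul_comm]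
    · rw [map_sub, Phi_t, Phi_t]
      simp [phi]

end HQ

open HQ in
/-- For the real quaternion algebra (tensor products over `ℚ`),
`HH₁(ℍ) = I₁(ℍ)/B₁(ℍ)` is isomorphic as an abelian group to the Kähler differentials
`Ω¹_ℝ` of `ℝ` over `ℤ`. -/
theorem statement17 :
    Nonempty ((↥(I1 (Quaternion ℝ)) ⧸
        (B1 (Quaternion ℝ)).comap (I1 (Quaternion ℝ)).subtype)
      ≃+ KaehlerDifferential ℤ ℝ) := by
  let K := (B1 (Quaternion ℝ)).comap (I1 (Quaternion ℝ)).subtype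
  let f : (↥(I1 (Quaternion ℝ)) ⧸ K) →+ KaehlerDifferential ℤ ℝ :=
    QuotientAddGroup.lift K.toAddSubgroup (Phi.comp (I1 (Quaternion ℝ)).subtype.toAddMonoidHom) (by
      rintro ⟨x, hx⟩ ⟨y, _, hy⟩
      change Phi x = 0
      have hy' : hochB2 H y = x := hy
      rw [← hy', Phi_b2])
  have hf : ∀ x : I1 (Quaternion ℝ), f (Submodule.Quotient.mk x) = Phi x := fun x => rfl
  refine ⟨AddEquiv.ofBijective f ⟨?_, ?_⟩⟩
  · rw [injective_iff_map_eq_zero]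
    intro a
    obtain ⟨x, rfl⟩ := Submodule.Quotient.mk_surjective _ a
    intro h
    rw [hf] at h
    rw [Submodule.Quotient.mk_eq_zero]
    exact ker_Phi x x.2 h
  · intro w
    obtain ⟨x, hx, rfl⟩ := surj w
    exact ⟨Submodule.Quotient.mk ⟨x, hx⟩, hf _⟩

end
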